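/- Let t > 1 be real, λ > 0, λ ≠ 1, μ = 1/λ, and let X_t be the 9×9 matrix with nonzero entries X₁₁ = X₅₅ = t; X₉₉ = 2/(t+1); X₁₅ = X₅₁ = X₁₉ = X₉₁ = X₅₉ = X₉₅ = 1; X₂₂ = X₆₆ = X₇₇ = λ²; X₃₃ = X₄₄ = X₈₈ = μ²; X₃₇ = X₇₃ = X₆₈ = X₈₆ = √(t/(t+1)) (all other entries 0). Then X_t is entangled, i.e., X_t does not lie in the convex cone generated by matrices of the form Q ⊗ P ∈ M₃(ℂ) ⊗ M₃(ℂ) with Q, P ∈ M₃(ℂ) positive semidefinite; yet both X_t and its partial transpose X_t^τ are positive semidefinite, so X_t is a PPT entangled state (up to normalization). -/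

import Mathlib

open Matrix Complex
open scoped ComplexOrder

/-- The partial transpose of a `9 × 9` matrix viewed as a `3 × 3` array of `3 × 3`
blocks `B_{ij}`: the `(i,j)` block of `pt9 X` is `B_{ji}`. -/
def pt9 (X : Matrix (Fin 9) (Fin 9) ℂ) : Matrix (Fin 9) (Fin 9) ℂ :=
  Matrix.of fun i j =>
    X ⟨3 * ((j : ℕ) / 3) + (i : ℕ) % 3, by have := j.isLt; omega⟩
      ⟨3 * ((i : ℕ) / 3) + (j : ℕ) % 3, by have := i.isLt; omega⟩

/-- The `9 × 9` matrix `X_t` (with parameters `t > 1`, `λ > 0`, `μ = 1/λ`). -/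
noncomputable def Xt (t lam mu : ℝ) : Matrix (Fin 9) (Fin 9) ℂ :=
  !![(t : ℂ), 0, 0, 0, 1, 0, 0, 0, 1;
     0, (lam : ℂ)^2, 0, 0, 0, 0, 0, 0, 0;
     0, 0, (mu : ℂ)^2, 0, 0, 0, ((Real.sqrt (t / (t + 1)) : ℝ) : ℂ), 0, 0;
     0, 0, 0, (mu : ℂ)^2, 0, 0, 0, 0, 0;
     1, 0, 0, 0, (t : ℂ), 0, 0, 0, 1;
     0, 0, 0, 0, 0, (lam : ℂ)^2, 0, ((Real.sqrt (t / (t + 1)) : ℝ) : ℂ), 0;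
     0, 0, ((Real.sqrt (t / (t + 1)) : ℝ) : ℂ), 0, 0, 0, (lam : ℂ)^2, 0, 0;
     0, 0, 0, 0, 0, ((Real.sqrt (t / (t + 1)) : ℝ) : ℂ), 0, (mu : ℂ)^2, 0;
     1, 0, 0, 0, 1, 0, 0, 0, ((2 / (t + 1) : ℝ) : ℂ)]

/-- The equivalence `Fin 3 × Fin 3 ≃ Fin 9` realizing the block structure: the pair
`(r, i)` (inner index `r`, block index `i`) corresponds to `3 * i + r`, so that a
`9 × 9` matrix is the `3 × 3` array of its `3 × 3` blocks. -/
def blockEquiv : Fin 3 × Fin 3 ≃ Fin 9 where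
  toFun p := ⟨3 * (p.2 : ℕ) + (p.1 : ℕ), by have := p.1.isLt; have := p.2.isLt; omega⟩
  invFun q := (⟨(q : ℕ) % 3, by omega⟩, ⟨(q : ℕ) / 3, by have := q.isLt; omega⟩)
  left_inv := by
    rintro ⟨⟨a, ha⟩, ⟨b, hb⟩⟩
    simp only [Prod.mk.injEq, Fin.mk.injEq]
    omega
  right_inv := by
    rintro ⟨q, hq⟩
    simp only [Fin.mk.injEq]
    omega

/-- A `9 × 9` matrix, identified with an element of `M₃(ℂ) ⊗ M₃(ℂ)`, is separable if it
lies in the convex cone generated by the Kronecker products `Q ⊗ P` of positive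
semidefinite matrices `Q, P ∈ M₃(ℂ)`. -/
def Separable9 (X : Matrix (Fin 9) (Fin 9) ℂ) : Prop :=
  ∃ (N : ℕ) (Q P : Fin N → Matrix (Fin 3) (Fin 3) ℂ),
    (∀ i, (Q i).PosSemidef) ∧ (∀ i, (P i).PosSemidef) ∧
      X = ∑ i, Matrix.reindex blockEquiv blockEquiv
        (Matrix.kroneckerMap (· * ·) (Q i) (P i))

/-!
A nonzero separable matrix `X = ∑ Qₖ ⊗ Pₖ` has a product vector `x ⊗ y` orthogonal to `ker X` such
that `x ⊗ star y` is orthogonal to `ker X^τ`: a kernel vector of a sum of positive semidefinite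
matrices is killed by every summand, so a nonzero row of one summand works. For `X_t` no such
vector exists. The kernel of `X_t^τ` contains `e_{i+1} ⊗ e_i - λ² e_i ⊗ e_{i+1}` for each `i`
mod 3, whence `x_{i+1} star y_i = λ² x_i star y_{i+1}`. Multiplying the three relations and using
`λ⁶ ≠ 1` forces `x_i = y_i = 0` for some `i`. One more kernel vector of `X_t` and one of `X_t^τ`
then exclude the remaining two coordinates. For `i = 2` they give `x_0 y_0 + x_1 y_1 = 0` while
`(x_0, x_1)` is proportional to `(star y_0, λ² star y_1)`. For `i = 0, 1` comparing absolute values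
would give `√(t/(t+1)) * (t+1) = t`, whereas the left-hand side is larger.
-/

open scoped Kronecker

section RangeCriterion

variable {m n ι R 𝕜 : Type*}

/-- The partial transpose of a matrix indexed by a product, transposing the second tensor factor.
Since `blockEquiv` lists the block index second, this is the block transposition `pt9`. -/
def partialTranspose (X : Matrix (m × n) (m × n) R) : Matrix (m × n) (m × n) R :=
  of fun p q => X (p.1, q.2) (q.1, p.2)

/-- The product vector `x ⊗ y`, indexed by pairs. -/
def productVec [Mul R] (x : m → R) (y : n → R) : m × n → R :=
  fun p => x p.1 * y p.2

theorem partialTranspose_sum_kronecker [NonUnitalNonAssocSemiring R] (s : Finset ι)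
    (Q : ι → Matrix m m R) (P : ι → Matrix n n R) :
    partialTranspose (∑ k ∈ s, Q k ⊗ₖ P k) = ∑ k ∈ s, Q k ⊗ₖ (P k)ᵀ := by
  ext p q
  simp [partialTranspose, Matrix.sum_apply]

variable [RCLike 𝕜] [Fintype m] [Fintype n]

theorem mulVec_eq_zero_of_sum_mulVec_eq_zero {s : Finset ι} {Z : ι → Matrix n n 𝕜}
    (hZ : ∀ k ∈ s, (Z k).PosSemidef) {w : n → 𝕜} (hw : (∑ k ∈ s, Z k) *ᵥ w = 0) {k : ι}
    (hk : k ∈ s) : Z k *ᵥ w = 0 := by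
  have hsum : ∑ k ∈ s, star w ⬝ᵥ (Z k *ᵥ w) = 0 := by
    rw [← dotProduct_sum, ← sum_mulVec, hw, dotProduct_zero]
  rw [← (hZ k hk).dotProduct_mulVec_zero_iff]
  exact (Finset.sum_eq_zero_iff_of_nonneg
    fun k hk => (hZ k hk).dotProduct_mulVec_nonneg w).1 hsum k hk

/-- The range criterion of P. Horodecki. Ranges appear as annihilators of kernels, and since
`⬝ᵥ` does not conjugate, `x` and `y` are the conjugates of the usual range vectors. -/
theorem exists_productVec_of_sum_kronecker {s : Finset ι} {Q : ι → Matrix m m 𝕜}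
    {P : ι → Matrix n n 𝕜} (hQ : ∀ k ∈ s, (Q k).PosSemidef) (hP : ∀ k ∈ s, (P k).PosSemidef)
    (hne : ∑ k ∈ s, Q k ⊗ₖ P k ≠ 0) :
    ∃ x : m → 𝕜, x ≠ 0 ∧ ∃ y : n → 𝕜, y ≠ 0 ∧
      (∀ w, (∑ k ∈ s, Q k ⊗ₖ P k) *ᵥ w = 0 → productVec x y ⬝ᵥ w = 0) ∧
      ∀ w, partialTranspose (∑ k ∈ s, Q k ⊗ₖ P k) *ᵥ w = 0 →
        productVec x (star y) ⬝ᵥ w = 0 := by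
  obtain ⟨k, hk, hQP⟩ := Finset.exists_ne_zero_of_sum_ne_zero hne
  obtain ⟨r, hr⟩ : ∃ r, Q k r ≠ 0 :=
    Function.ne_iff.1 fun h => hQP (by rw [h]; exact kroneckerMap_zero_left _ zero_mul _)
  obtain ⟨i, hi⟩ : ∃ i, P k i ≠ 0 :=
    Function.ne_iff.1 fun h => hQP (by rw [h]; exact kroneckerMap_zero_right _ mul_zero _)
  refine ⟨Q k r, hr, P k i, hi, fun w hw => ?_, fun w hw => ?_⟩
  · exact congrFun (mulVec_eq_zero_of_sum_mulVec_eq_zero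
      (fun k hk => (hQ k hk).kronecker (hP k hk)) hw hk) (r, i)
  · have hrow : star (P k i) = (P k)ᵀ i := funext fun j => (hP k hk).1.apply j i
    rw [partialTranspose_sum_kronecker] at hw
    rw [hrow]
    exact congrFun (mulVec_eq_zero_of_sum_mulVec_eq_zero
      (fun k hk => (hQ k hk).kronecker (hP k hk).transpose) hw hk) (r, i)

end RangeCriterion

theorem pt9_reindex (X : Matrix (Fin 3 × Fin 3) (Fin 3 × Fin 3) ℂ) :
    pt9 (reindex blockEquiv blockEquiv X) =
      reindex blockEquiv blockEquiv (partialTranspose X) := by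
  ext i j
  obtain ⟨p, rfl⟩ := blockEquiv.surjective i
  obtain ⟨q, rfl⟩ := blockEquiv.surjective j
  have hpq : ∀ p q : Fin 3 × Fin 3, (⟨3 * ((blockEquiv q : ℕ) / 3) + (blockEquiv p : ℕ) % 3,
      by have := (blockEquiv q).isLt; omega⟩ : Fin 9) = blockEquiv (p.1, q.2) := by decide
  simp [pt9, partialTranspose, hpq]

theorem Separable9.exists_productVec {X : Matrix (Fin 9) (Fin 9) ℂ} (hX : Separable9 X)
    (hne : X ≠ 0) :
    ∃ x : Fin 3 → ℂ, x ≠ 0 ∧ ∃ y : Fin 3 → ℂ, y ≠ 0 ∧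
      (∀ w, X *ᵥ w = 0 → (productVec x y ∘ blockEquiv.symm) ⬝ᵥ w = 0) ∧
      ∀ w, pt9 X *ᵥ w = 0 → (productVec x (star y) ∘ blockEquiv.symm) ⬝ᵥ w = 0 := by
  obtain ⟨N, Q, P, hQ, hP, hsum⟩ := hX
  have hsum' : X = reindex blockEquiv blockEquiv (∑ k, Q k ⊗ₖ P k) := by
    rw [hsum]
    ext i j
    simp [Matrix.sum_apply]
  have hne' : ∑ k, Q k ⊗ₖ P k ≠ 0 := fun h => hne (by rw [hsum', h]; rfl)
  have hmulVec : ∀ (Y : Matrix (Fin 3 × Fin 3) (Fin 3 × Fin 3) ℂ) (w : Fin 9 → ℂ),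
      reindex blockEquiv blockEquiv Y *ᵥ w = 0 → Y *ᵥ (w ∘ blockEquiv) = 0 := by
    intro Y w hw
    rw [reindex_apply, submatrix_mulVec_equiv, Equiv.symm_symm] at hw
    exact blockEquiv.symm.surjective.injective_comp_right hw
  obtain ⟨x, hx, y, hy, hker, hker'⟩ :=
    exists_productVec_of_sum_kronecker (fun k _ => hQ k) (fun k _ => hP k) hne'
  refine ⟨x, hx, y, hy, fun w hw => ?_, fun w hw => ?_⟩ <;> rw [comp_equiv_symm_dotProduct]
  · exact hker _ (hmulVec _ _ (hsum' ▸ hw))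
  · rw [hsum', pt9_reindex] at hw
    exact hker' _ (hmulVec _ _ hw)

theorem apply_eq_zero_of_cyclic {R : Type*} [MulZeroClass R] [NoZeroDivisors R] {x z : Fin 3 → R}
    (hx : x ≠ 0) (h : ∀ i, x (i + 1) * z i = 0 ↔ x i * z (i + 1) = 0) {i : Fin 3} (hi : x i = 0) :
    z i = 0 := by
  by_contra hz
  refine hx (funext fun j => ?_)
  have hcover : ∀ i j : Fin 3, j = i ∨ j = i + 1 ∨ i = j + 1 := by decide
  rcases hcover i j with rfl | rfl | rfl
  · exact hi
  · exact (mul_eq_zero.1 ((h i).2 (by rw [hi, zero_mul]))).resolve_right hz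
  · exact (mul_eq_zero.1 ((h j).1 (by rw [hi, zero_mul]))).resolve_right hz

/-- Multiplying the three relations gives `∏ i, x i * z i = L ^ 3 * ∏ i, x i * z i`, so some
coordinate vanishes. -/
theorem exists_common_zero_of_cyclic {K : Type*} [Field K] {x z : Fin 3 → K} {L : K}
    (hL₀ : L ≠ 0) (hL : L ^ 3 ≠ 1) (hx : x ≠ 0) (hz : z ≠ 0)
    (h : ∀ i, x (i + 1) * z i = L * (x i * z (i + 1))) : ∃ i, x i = 0 ∧ z i = 0 := by
  have hprod : ∏ i, x i * z i = 0 := by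
    have h₀ : x 1 * z 0 = L * (x 0 * z 1) := h 0
    have h₁ : x 2 * z 1 = L * (x 1 * z 2) := h 1
    have h₂ : x 0 * z 2 = L * (x 2 * z 0) := h 2
    have hmul : (L ^ 3 - 1) * ∏ i, x i * z i = 0 := by
      rw [Fin.prod_univ_three]
      linear_combination -(x 2 * z 1 * (x 0 * z 2)) * h₀ - L * (x 0 * z 1) * (x 0 * z 2) * h₁
        - L ^ 2 * (x 0 * z 1) * (x 1 * z 2) * h₂
    exact (mul_eq_zero.1 hmul).resolve_left (sub_ne_zero.2 hL)
  have hiff : ∀ i, x (i + 1) * z i = 0 ↔ x i * z (i + 1) = 0 := fun i => by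
    rw [h i, mul_eq_zero, or_iff_right hL₀]
  obtain ⟨i, -, hi⟩ := Finset.prod_eq_zero_iff.1 hprod
  rcases mul_eq_zero.1 hi with hxi | hzi
  · exact ⟨i, hxi, apply_eq_zero_of_cyclic hx hiff hxi⟩
  · refine ⟨i, apply_eq_zero_of_cyclic hz (fun j => ?_) hzi, hzi⟩
    rw [mul_comm, mul_comm (z j)]
    exact (hiff j).symm

theorem mul_eq_zero_of_norm_mul_ne {a b c p q u v : ℂ} (h : p * u = a * (q * v))
    (h' : b * (p * star u) = c * (q * star v)) (hne : ‖b‖ * ‖a‖ ≠ ‖c‖) : q * v = 0 := by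
  have hn : ‖p‖ * ‖u‖ = ‖a‖ * (‖q‖ * ‖v‖) := by simpa using congrArg norm h
  have hn' : ‖b‖ * (‖p‖ * ‖u‖) = ‖c‖ * (‖q‖ * ‖v‖) := by
    simpa using congrArg norm h'
  have hmul : (‖b‖ * ‖a‖ - ‖c‖) * ‖q * v‖ = 0 := by
    rw [norm_mul]
    linear_combination hn' - ‖b‖ * hn
  exact norm_eq_zero.1 ((mul_eq_zero.1 hmul).resolve_left (sub_ne_zero.2 hne))

theorem pair_eq_zero_of_norm_mul_ne {a b c p q u v : ℂ} (h : p * u = a * (q * v))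
    (h' : b * (p * star u) = c * (q * star v)) (hne : ‖b‖ * ‖a‖ ≠ ‖c‖)
    (hiff : q * star u = 0 ↔ p * star v = 0) : (p = 0 ∧ q = 0) ∨ (u = 0 ∧ v = 0) := by
  have hqv : q * v = 0 := mul_eq_zero_of_norm_mul_ne h h' hne
  have hpu : p * u = 0 := by rw [h, hqv, mul_zero]
  simp only [mul_eq_zero, star_eq_zero] at hqv hpu hiff
  tauto

theorem pair_eq_zero_of_orthogonal {p q u v : ℂ} {L : ℝ} (hL : 0 < L) (h : p * u + q * v = 0)
    (h' : q * star u = L * (p * star v)) : (p = 0 ∧ q = 0) ∨ (u = 0 ∧ v = 0) := by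
  have hp : p * ((normSq u + L * normSq v : ℝ) : ℂ) = 0 := by
    push_cast
    rw [← mul_conj, ← mul_conj, ← star_def]
    linear_combination star u * h - v * h'
  have hq : q * ((normSq u + L * normSq v : ℝ) : ℂ) = 0 := by
    push_cast
    rw [← mul_conj, ← mul_conj, ← star_def]
    linear_combination L * star v * h + u * h'
  by_cases hN : normSq u + L * normSq v = 0
  · right
    have hv : 0 ≤ L * normSq v := mul_nonneg hL.le (normSq_nonneg v)
    obtain ⟨hu₀, hv₀⟩ := (add_eq_zero_iff_of_nonneg (normSq_nonneg u) hv).1 hN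
    exact ⟨normSq_eq_zero.1 hu₀, normSq_eq_zero.1 ((mul_eq_zero.1 hv₀).resolve_left hL.ne')⟩
  · left
    have hN' : ((normSq u + L * normSq v : ℝ) : ℂ) ≠ 0 := ofReal_ne_zero.2 hN
    exact ⟨(mul_eq_zero.1 hp).resolve_right hN', (mul_eq_zero.1 hq).resolve_right hN'⟩

/-- In each of the three cases of `exists_common_zero_of_cyclic` only a pair of coordinates of `x`
and of `y` remains. -/
theorem eq_zero_or_eq_zero_of_productVec_equations {x y : Fin 3 → ℂ} {a b c : ℂ} {L : ℝ}
    (hL₀ : 0 < L) (hL : L ≠ 1) (hne : ‖b‖ * ‖a‖ ≠ ‖c‖)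
    (hcyc : ∀ i, x (i + 1) * star (y i) = L * (x i * star (y (i + 1))))
    (h : x 0 * y 0 + x 1 * y 1 = a * (x 2 * y 2))
    (h' : b * (x 0 * star (y 0) + x 1 * star (y 1)) = c * (x 2 * star (y 2))) :
    x = 0 ∨ y = 0 := by
  by_contra! hxy
  have hL₀' : (L : ℂ) ≠ 0 := ofReal_ne_zero.2 hL₀.ne'
  have hL' : (L : ℂ) ^ 3 ≠ 1 := by
    exact_mod_cast mt (pow_eq_one_iff_of_nonneg hL₀.le three_ne_zero).1 hL
  have hiff : ∀ i, x (i + 1) * star (y i) = 0 ↔ x i * star (y (i + 1)) = 0 := fun i => by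
    rw [hcyc i, mul_eq_zero, or_iff_right hL₀']
  have hx : ¬ (x 0 = 0 ∧ x 1 = 0 ∧ x 2 = 0) := fun ⟨h₀, h₁, h₂⟩ =>
    hxy.1 (funext fun i => by fin_cases i <;> assumption)
  have hy : ¬ (y 0 = 0 ∧ y 1 = 0 ∧ y 2 = 0) := fun ⟨h₀, h₁, h₂⟩ =>
    hxy.2 (funext fun i => by fin_cases i <;> assumption)
  obtain ⟨i, hxi, hyi⟩ :=
    exists_common_zero_of_cyclic (z := star y) hL₀' hL' hxy.1 (star_ne_zero.2 hxy.2) hcyc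
  replace hyi : y i = 0 := star_eq_zero.1 hyi
  fin_cases i <;> simp only [Fin.zero_eta, Fin.mk_one, Fin.reduceFinMk] at hxi hyi <;>
    simp only [hxi, hyi, zero_mul, zero_add, add_zero, mul_zero] at h h'
  · have := pair_eq_zero_of_norm_mul_ne h h' hne (hiff 1)
    tauto
  · have := pair_eq_zero_of_norm_mul_ne h h' hne (hiff 2).symm
    tauto
  · have := pair_eq_zero_of_orthogonal hL₀ h (hcyc 0)
    tauto

section Xt

variable {t lam mu : ℝ}

theorem sqrt_div_add_one_lt_one (ht : 0 < t) : √(t / (t + 1)) < 1 := by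
  rw [Real.sqrt_lt' one_pos, one_pow, div_lt_one (by linarith)]
  linarith

theorem Xt_posSemidef (ht : 1 ≤ t) (hmul : lam * mu = 1) : (Xt t lam mu).PosSemidef := by
  set s := √(t / (t + 1)) with hs
  have hs₀ : 0 ≤ s := Real.sqrt_nonneg _
  have hs₁ : 0 ≤ 1 - s := sub_nonneg.2 (sqrt_div_add_one_lt_one (by linarith)).le
  have hmul' : (lam : ℂ) * mu = 1 := by exact_mod_cast hmul
  have ht₁ : (t : ℂ) + 1 ≠ 0 := by exact_mod_cast (by linarith : t + 1 ≠ 0)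
  let u : Fin 9 → ℂ := ![1, 0, 0, 0, 1, 0, 0, 0, (2 / (t + 1) : ℝ)]
  let v : Fin 9 → ℂ := ![1, 0, 0, 0, -1, 0, 0, 0, 0]
  let p : Fin 9 → ℂ := ![0, 0, mu, 0, 0, 0, lam, 0, 0]
  let q : Fin 9 → ℂ := ![0, 0, 0, 0, 0, lam, 0, mu, 0]
  let d : Fin 9 → ℝ := ![0, lam ^ 2, (1 - s) * mu ^ 2, mu ^ 2, 0, (1 - s) * lam ^ 2,
    (1 - s) * lam ^ 2, (1 - s) * mu ^ 2, 0]
  have hsum : Xt t lam mu = ((t + 1) / 2) • vecMulVec u (star u) +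
      ((t - 1) / 2) • vecMulVec v (star v) + s • vecMulVec p (star p) +
      s • vecMulVec q (star q) + diagonal fun i => (d i : ℂ) := by
    ext i j
    simp only [Matrix.add_apply, Matrix.smul_apply, vecMulVec_apply, Pi.star_apply, real_smul]
    fin_cases i <;> fin_cases j <;>
      simp only [Xt, u, v, p, q, d, ← hs, of_apply, cons_val', cons_val,
        cons_val_zero, cons_val_one, cons_val_fin_one, Fin.isValue, Fin.reduceFinMk, Fin.zero_eta,
        Fin.mk_one, star_def, conj_ofReal, map_zero, map_one, map_neg,
        diagonal_apply_eq, diagonal_apply_ne, ne_eq, Fin.reduceEq, not_false_eq_true] <;>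
      push_cast <;>
      first
      | ring1
      | linear_combination (-(s : ℂ)) * hmul'
      | field
  have hd : ∀ i, (0 : ℂ) ≤ d i := fun i => by
    rw [zero_le_real]
    fin_cases i <;> simp only [d, cons_val, cons_val_zero, cons_val_one, Fin.isValue,
      Fin.reduceFinMk, Fin.zero_eta, Fin.mk_one] <;> positivity
  rw [hsum]
  exact (((((posSemidef_vecMulVec_self_star u).smul (by linarith)).add
    ((posSemidef_vecMulVec_self_star v).smul (by linarith))).add
    ((posSemidef_vecMulVec_self_star p).smul hs₀)).add
    ((posSemidef_vecMulVec_self_star q).smul hs₀)).add (.diagonal hd)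

theorem pt9_eta (X : Matrix (Fin 9) (Fin 9) ℂ) :
    pt9 X =
      !![X 0 0, X 0 1, X 0 2, X 3 0, X 3 1, X 3 2, X 6 0, X 6 1, X 6 2;
        X 1 0, X 1 1, X 1 2, X 4 0, X 4 1, X 4 2, X 7 0, X 7 1, X 7 2;
        X 2 0, X 2 1, X 2 2, X 5 0, X 5 1, X 5 2, X 8 0, X 8 1, X 8 2;
        X 0 3, X 0 4, X 0 5, X 3 3, X 3 4, X 3 5, X 6 3, X 6 4, X 6 5;
        X 1 3, X 1 4, X 1 5, X 4 3, X 4 4, X 4 5, X 7 3, X 7 4, X 7 5;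
        X 2 3, X 2 4, X 2 5, X 5 3, X 5 4, X 5 5, X 8 3, X 8 4, X 8 5;
        X 0 6, X 0 7, X 0 8, X 3 6, X 3 7, X 3 8, X 6 6, X 6 7, X 6 8;
        X 1 6, X 1 7, X 1 8, X 4 6, X 4 7, X 4 8, X 7 6, X 7 7, X 7 8;
        X 2 6, X 2 7, X 2 8, X 5 6, X 5 7, X 5 8, X 8 6, X 8 7, X 8 8] := by
  ext i j
  fin_cases i <;> fin_cases j <;> rfl

theorem pt9_Xt (t lam mu : ℝ) :
    pt9 (Xt t lam mu) =
      !![(t : ℂ), 0, 0, 0, 0, 0, 0, 0, (√(t / (t + 1)) : ℝ);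
        0, (lam : ℂ) ^ 2, 0, 1, 0, 0, 0, 0, 0;
        0, 0, (mu : ℂ) ^ 2, 0, 0, 0, 1, 0, 0;
        0, 1, 0, (mu : ℂ) ^ 2, 0, 0, 0, 0, 0;
        0, 0, 0, 0, (t : ℂ), 0, 0, 0, (√(t / (t + 1)) : ℝ);
        0, 0, 0, 0, 0, (lam : ℂ) ^ 2, 0, 1, 0;
        0, 0, 1, 0, 0, 0, (lam : ℂ) ^ 2, 0, 0;
        0, 0, 0, 0, 0, 1, 0, (mu : ℂ) ^ 2, 0;
        (√(t / (t + 1)) : ℝ), 0, 0, 0, (√(t / (t + 1)) : ℝ), 0, 0, 0,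
          ((2 / (t + 1) : ℝ) : ℂ)] := by
  rw [pt9_eta]
  simp [Xt]

theorem sqrt_sq_mul_add_one (ht : 0 < t) : √(t / (t + 1)) ^ 2 * (t + 1) = t := by
  rw [Real.sq_sqrt (by positivity)]
  field_simp

theorem lt_sqrt_mul_add_one (ht : 0 < t) : t < √(t / (t + 1)) * (t + 1) := by
  calc t = √(t / (t + 1)) * (t + 1) * √(t / (t + 1)) := by
        linear_combination -sqrt_sq_mul_add_one ht
    _ < √(t / (t + 1)) * (t + 1) :=
        mul_lt_of_lt_one_right (by positivity) (sqrt_div_add_one_lt_one ht)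

theorem pt9_Xt_posSemidef (ht : 0 < t) (hmul : lam * mu = 1) :
    (pt9 (Xt t lam mu)).PosSemidef := by
  set s := √(t / (t + 1)) with hs
  have hsq : (s : ℂ) ^ 2 * (t + 1) = t := by exact_mod_cast sqrt_sq_mul_add_one ht
  have hmul' : (lam : ℂ) * mu = 1 := by exact_mod_cast hmul
  have ht₀ : (t : ℂ) ≠ 0 := by exact_mod_cast ht.ne'
  have ht₁ : (t : ℂ) + 1 ≠ 0 := by exact_mod_cast (by linarith : t + 1 ≠ 0)
  let u : Fin 9 → ℂ := ![t, 0, 0, 0, 0, 0, 0, 0, s]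
  let v : Fin 9 → ℂ := ![0, 0, 0, 0, t, 0, 0, 0, s]
  let p : Fin 9 → ℂ := ![0, lam, 0, mu, 0, 0, 0, 0, 0]
  let q : Fin 9 → ℂ := ![0, 0, mu, 0, 0, 0, lam, 0, 0]
  let r : Fin 9 → ℂ := ![0, 0, 0, 0, 0, lam, 0, mu, 0]
  have hsum : pt9 (Xt t lam mu) = t⁻¹ • vecMulVec u (star u) + t⁻¹ • vecMulVec v (star v) +
      vecMulVec p (star p) + vecMulVec q (star q) + vecMulVec r (star r) := by
    rw [pt9_Xt]
    ext i j
    simp only [Matrix.add_apply, Matrix.smul_apply, vecMulVec_apply, Pi.star_apply, real_smul]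
    fin_cases i <;> fin_cases j <;>
      simp only [u, v, p, q, r, ← hs, of_apply, cons_val', cons_val,
        cons_val_zero, cons_val_one, cons_val_fin_one, Fin.isValue, Fin.reduceFinMk, Fin.zero_eta,
        Fin.mk_one, star_def, conj_ofReal, map_zero] <;>
      push_cast <;>
      first
      | ring1
      | linear_combination -hmul'
      | (field_simp; linear_combination (-2 : ℂ) * hsq)
      | field
  have ht' : 0 ≤ t⁻¹ := by positivity
  rw [hsum]
  exact (((((posSemidef_vecMulVec_self_star u).smul ht').add
    ((posSemidef_vecMulVec_self_star v).smul ht')).add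
    (posSemidef_vecMulVec_self_star p)).add
    (posSemidef_vecMulVec_self_star q)).add (posSemidef_vecMulVec_self_star r)

theorem Xt_mulVec_kernel (lam mu : ℝ) (ht : t + 1 ≠ 0) :
    Xt t lam mu *ᵥ ![1, 0, 0, 0, 1, 0, 0, 0, -(t + 1)] = 0 := by
  have ht₁ : (t : ℂ) + 1 ≠ 0 := by exact_mod_cast ht
  ext i
  fin_cases i <;> simp [Xt, mulVec, dotProduct, Fin.sum_univ_succ]
  field

theorem pt9_Xt_mulVec_kernel (lam mu : ℝ) (ht : 0 < t) :
    pt9 (Xt t lam mu) *ᵥ ![(√(t / (t + 1)) : ℝ), 0, 0, 0, (√(t / (t + 1)) : ℝ), 0, 0, 0, -t] =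
      0 := by
  have hsq : (√(t / (t + 1)) : ℂ) ^ 2 * (t + 1) = t := by exact_mod_cast sqrt_sq_mul_add_one ht
  have ht₁ : (t : ℂ) + 1 ≠ 0 := by exact_mod_cast (by linarith : t + 1 ≠ 0)
  rw [pt9_Xt]
  ext i
  fin_cases i <;>
    simp only [mulVec_cons, mulVec_empty, Pi.add_apply, Pi.smul_apply, Pi.zero_apply,
      Function.comp_apply, head_cons, tail_cons, smul_eq_mul, cons_val, cons_val_zero,
      cons_val_one, Nat.succ_eq_add_one, Nat.reduceAdd, Fin.isValue, Fin.reduceFinMk, Fin.zero_eta,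
      Fin.mk_one] <;>
    push_cast <;>
    first
    | ring1
    | (field_simp; linear_combination (2 : ℂ) * hsq)

theorem pt9_Xt_mulVec_cyclic_kernel (t : ℝ) (hmul : lam * mu = 1) (i : Fin 3) :
    pt9 (Xt t lam mu) *ᵥ (Pi.single (blockEquiv (i + 1, i)) 1 -
      Pi.single (blockEquiv (i, i + 1)) (lam ^ 2 : ℂ)) = 0 := by
  have hmul' : (lam : ℂ) ^ 2 * mu ^ 2 = 1 := by exact_mod_cast (by rw [← mul_pow, hmul, one_pow])
  rw [pt9_Xt, mulVec_sub, mulVec_single_one, mulVec_single, sub_eq_zero]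
  ext j
  fin_cases i <;> fin_cases j <;> simp [blockEquiv] <;> linear_combination -hmul'

theorem productVec_dotProduct_diag (x y : Fin 3 → ℂ) (a b c : ℂ) :
    (productVec x y ∘ blockEquiv.symm) ⬝ᵥ ![a, 0, 0, 0, b, 0, 0, 0, c] =
      x 0 * y 0 * a + (x 1 * y 1 * b + x 2 * y 2 * c) := by
  simp [dotProduct, Fin.sum_univ_succ, productVec, blockEquiv]

theorem not_separable9_Xt (ht : 0 < t) (hmul : lam * mu = 1) (hlam : lam ^ 2 ≠ 1) :
    ¬ Separable9 (Xt t lam mu) := by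
  intro hsep
  set s := √(t / (t + 1))
  have hs₀ : 0 < s := Real.sqrt_pos.2 (by positivity)
  have hne : Xt t lam mu ≠ 0 := fun h => ht.ne' (ofReal_eq_zero.1 (congrFun₂ h 0 0))
  have hlam₀ : 0 < lam ^ 2 := pow_two_pos_of_ne_zero (left_ne_zero_of_mul_eq_one hmul)
  have hnorm : ‖(s : ℂ)‖ * ‖(t + 1 : ℂ)‖ ≠ ‖(t : ℂ)‖ := by
    rw [← ofReal_one, ← ofReal_add, norm_real, norm_real, norm_real, Real.norm_of_nonneg hs₀.le,
      Real.norm_of_nonneg (by positivity), Real.norm_of_nonneg ht.le]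
    exact (lt_sqrt_mul_add_one ht).ne'
  obtain ⟨x, hx, y, hy, hker, hker'⟩ := hsep.exists_productVec hne
  refine (eq_zero_or_eq_zero_of_productVec_equations hlam₀ hlam hnorm (fun i => ?_) ?_ ?_).elim
    hx hy
  · simpa [productVec, dotProduct_sub, sub_eq_zero, mul_comm] using
      hker' _ (pt9_Xt_mulVec_cyclic_kernel t hmul i)
  · have hdiag := hker _ (Xt_mulVec_kernel lam mu (by positivity))
    rw [productVec_dotProduct_diag] at hdiag
    linear_combination hdiag
  · have hdiag := hker' _ (pt9_Xt_mulVec_kernel lam mu ht)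
    rw [productVec_dotProduct_diag] at hdiag
    simp only [Pi.star_apply] at hdiag
    linear_combination hdiag

end Xt

theorem Xt_entangled_ppt_general (t lam mu : ℝ) (ht : 1 ≤ t) (hmul : lam * mu = 1)
    (hlam : lam ^ 2 ≠ 1) :
    ¬ Separable9 (Xt t lam mu) ∧
      (Xt t lam mu).PosSemidef ∧ (pt9 (Xt t lam mu)).PosSemidef :=
  have ht₀ : 0 < t := zero_lt_one.trans_le ht
  ⟨not_separable9_Xt ht₀ hmul hlam, Xt_posSemidef ht hmul, pt9_Xt_posSemidef ht₀ hmul⟩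

/-- `X_t` is entangled, yet both `X_t` and `X_t^τ` are positive semidefinite: `X_t` is a
PPT entangled state (up to normalization). -/
theorem Xt_entangled_ppt (t lam mu : ℝ) (ht : 1 < t) (hlam : 0 < lam) (h1 : lam ≠ 1)
    (hmu : mu = 1 / lam) :
    ¬ Separable9 (Xt t lam mu) ∧
      (Xt t lam mu).PosSemidef ∧ (pt9 (Xt t lam mu)).PosSemidef :=
  Xt_entangled_ppt_general t lam mu ht.le (by rw [hmu, mul_one_div_cancel hlam.ne'])
    (mt (pow_eq_one_iff_of_nonneg hlam.le two_ne_zero).1 h1)
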